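/- arXiv:2003.11000 — 2 statements merged into one kernel-verified Lean document; each statement's English description precedes it below -/
import Mathlib

section
/- Let G be a group, k a field, K and H subgroups of G, ψ : K → kˣ and φ : H → kˣ group homomorphisms, and g ∈ G such that K ≤ g⁻¹Hg and ψ(x) = φ(g x g⁻¹) for all x ∈ K. Suppose x_K ∈ stab_G(K,ψ) and x_H ∈ stab_G(H,φ) satisfy the monocentre condition: g x_K g⁻¹ ∈ stab_G(H,φ) and g x_K g⁻¹ ∈ x_H · ker(φ). Then the two k[G]-module homomorphisms k[G] ⊗_{k[K]} k_ψ → k[G] ⊗_{k[H]} k_φ determined on generators by g' ⊗ v ↦ g'(g x_K)⁻¹ ⊗ v and by g' ⊗ v ↦ g'(x_H g)⁻¹ ⊗ v are equal (i.e. the composites [(K,ψ),g,(H,φ)]·[(K,ψ),x_K,(K,ψ)] and [(H,φ),x_H,(H,φ)]·[(K,ψ),g,(H,φ)] coincide). -/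
/-- The stabiliser of the pair `(H, φ)`:
`stab_G(H,φ) = {z ∈ G : zHz⁻¹ = H and φ(zxz⁻¹) = φ(x) for all x ∈ H}`. -/
def stabPair {G : Type*} [Group G] {k : Type*} [Field k] (H : Subgroup G) (φ : H →* kˣ) :
    Set G :=
  {z : G | (∀ x : G, x ∈ H ↔ z * x * z⁻¹ ∈ H) ∧
    ∀ (x : G) (hx : x ∈ H) (hx' : z * x * z⁻¹ ∈ H), φ ⟨z * x * z⁻¹, hx'⟩ = φ ⟨x, hx⟩}

/-- The left `k[G]`-submodule of relations defining the induced module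
`k[G] ⊗_{k[H]} k_φ` as the quotient `k[G]/⟨h - φ(h)·1 : h ∈ H⟩`:
in the quotient, `g' ⊗ v` corresponds to `v·[g']`, and `g'h ⊗ v = φ(h)·(g' ⊗ v)`. -/
noncomputable def monomialRel (k : Type*) [Field k] {G : Type*} [Group G]
    (H : Subgroup G) (φ : H →* kˣ) : Submodule (MonoidAlgebra k G) (MonoidAlgebra k G) :=
  Submodule.span (MonoidAlgebra k G)
    {a | ∃ h : H, a = MonoidAlgebra.of k G (h : G) - ((φ h : kˣ) : k) • 1}

/-!
A `k[G]`-linear map out of `k[G] ⊗_{k[K]} k_ψ` is determined by its value on `1 ⊗ 1`, so it suffices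
to compare `(g x_K)⁻¹ ⊗ 1` with `(x_H g)⁻¹ ⊗ 1`. These agree because
`(g x_K)⁻¹ = (x_H g)⁻¹ · (x_H g)(g x_K)⁻¹`, where the last factor lies in `ker φ`: writing
`g x_K g⁻¹ = x_H w` with `w ∈ ker φ`, it equals `x_H w⁻¹ x_H⁻¹`, and `x_H` normalises `ker φ`.
-/

theorem linearMap_quotient_ext_one {R M : Type*} [Ring R] [AddCommGroup M] [Module R M]
    {I : Submodule R R} {S T : (R ⧸ I) →ₗ[R] M}
    (h : S (Submodule.Quotient.mk 1) = T (Submodule.Quotient.mk 1)) : S = T :=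
  Submodule.linearMap_qext I (LinearMap.ext_ring h)

theorem mem_map_subtype_ker_iff {G M : Type*} [Group G] [MulOneClass M] {H : Subgroup G}
    {φ : H →* M} {x : G} :
    x ∈ φ.ker.map H.subtype ↔ ∃ hx : x ∈ H, φ ⟨x, hx⟩ = 1 := by
  simp only [Subgroup.mem_map, MonoidHom.mem_ker, Subgroup.subtype_apply, Subtype.exists,
    exists_and_right, exists_eq_right]

theorem mul_inv_mem_of_mem_normalizer {G : Type*} [Group G] {N : Subgroup G} {x z : G}
    (hx : x ∈ Subgroup.normalizer (N : Set G)) (hxz : x⁻¹ * z ∈ N) : x * z⁻¹ ∈ N := by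
  have conj_mem := (Subgroup.mem_normalizer_iff.mp hx _).mp (N.inv_mem hxz)
  rwa [mul_inv_rev, inv_inv, ← mul_assoc, mul_inv_cancel_right] at conj_mem

section MonomialPair

variable {G : Type*} [Group G] {k : Type*} [Field k] {H : Subgroup G} {φ : H →* kˣ}

theorem mem_normalizer_ker_of_mem_stabPair {z : G} (hz : z ∈ stabPair H φ) :
    z ∈ Subgroup.normalizer (φ.ker.map H.subtype : Set G) := by
  obtain ⟨conj_mem_iff, map_conj⟩ := hz
  refine Subgroup.mem_normalizer_iff.mpr fun x ↦ ?_
  rw [mem_map_subtype_ker_iff, mem_map_subtype_ker_iff]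
  constructor
  · rintro ⟨hx, hφx⟩
    exact ⟨(conj_mem_iff x).mp hx, (map_conj x hx _).trans hφx⟩
  · rintro ⟨hx, hφx⟩
    exact ⟨(conj_mem_iff x).mpr hx, (map_conj x _ hx).symm.trans hφx⟩

theorem mk_of_mul_coe (g : G) (h : H) :
    (Submodule.Quotient.mk (MonoidAlgebra.of k G (g * h)) :
      MonoidAlgebra k G ⧸ monomialRel k H φ) =
      (φ h : k) • Submodule.Quotient.mk (MonoidAlgebra.of k G g) := by
  rw [← Submodule.Quotient.mk_smul, Submodule.Quotient.eq]
  have relation_mem : MonoidAlgebra.of k G (h : G) - (φ h : k) • 1 ∈ monomialRel k H φ :=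
    Submodule.subset_span ⟨h, rfl⟩
  have translate_mem := (monomialRel k H φ).smul_mem (MonoidAlgebra.of k G g) relation_mem
  rwa [smul_eq_mul, mul_sub, ← map_mul, mul_smul_comm, mul_one] at translate_mem

theorem mk_of_inv_eq_of_mul_inv_mem_ker {a b : G} (hab : b * a⁻¹ ∈ φ.ker.map H.subtype) :
    (Submodule.Quotient.mk (MonoidAlgebra.of k G a⁻¹) :
      MonoidAlgebra k G ⧸ monomialRel k H φ) =
      Submodule.Quotient.mk (MonoidAlgebra.of k G b⁻¹) := by
  obtain ⟨hH, hφ⟩ := mem_map_subtype_ker_iff.mp hab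
  simpa only [inv_mul_cancel_left, hφ, Units.val_one, one_smul] using
    mk_of_mul_coe (φ := φ) b⁻¹ ⟨b * a⁻¹, hH⟩

end MonomialPair

theorem monocentre_composites_eq_general
    {G : Type*} [Group G] {k : Type*} [Field k]
    (K H : Subgroup G) (ψ : K →* kˣ) (φ : H →* kˣ) (g xK xH : G)
    (hxH : xH ∈ Subgroup.normalizer (φ.ker.map H.subtype : Set G))
    (hmc : xH⁻¹ * (g * xK * g⁻¹) ∈ φ.ker.map H.subtype)
    (T₁ T₂ : (MonoidAlgebra k G ⧸ monomialRel k K ψ) →ₗ[MonoidAlgebra k G]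
      (MonoidAlgebra k G ⧸ monomialRel k H φ))
    (hT₁ : ∀ g' : G, T₁ (Submodule.Quotient.mk (MonoidAlgebra.of k G g')) =
      Submodule.Quotient.mk (MonoidAlgebra.of k G (g' * (g * xK)⁻¹)))
    (hT₂ : ∀ g' : G, T₂ (Submodule.Quotient.mk (MonoidAlgebra.of k G g')) =
      Submodule.Quotient.mk (MonoidAlgebra.of k G (g' * (xH * g)⁻¹))) :
    T₁ = T₂ := by
  have hker : xH * g * (g * xK)⁻¹ ∈ φ.ker.map H.subtype := by
    convert mul_inv_mem_of_mem_normalizer hxH hmc using 1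
    group
  apply linearMap_quotient_ext_one
  rw [← map_one (MonoidAlgebra.of k G), hT₁, hT₂, one_mul, one_mul]
  exact mk_of_inv_eq_of_mul_inv_mem_ker hker

/-- Proposition 3.1: under the monocentre condition, the composites
`[(K,ψ),g,(H,φ)]·[(K,ψ),x_K,(K,ψ)]` and `[(H,φ),x_H,(H,φ)]·[(K,ψ),g,(H,φ)]`
coincide, i.e. the two `k[G]`-module homomorphisms
`k[G] ⊗_{k[K]} k_ψ → k[G] ⊗_{k[H]} k_φ`, determined on generators by
`g' ⊗ v ↦ g'(g x_K)⁻¹ ⊗ v` and by `g' ⊗ v ↦ g'(x_H g)⁻¹ ⊗ v`, are equal. -/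
theorem monocentre_composites_eq
    {G : Type*} [Group G] {k : Type*} [Field k]
    (K H : Subgroup G) (ψ : K →* kˣ) (φ : H →* kˣ) (g : G)
    (hKH : ∀ x ∈ K, g * x * g⁻¹ ∈ H)
    (hψφ : ∀ (x : G) (hx : x ∈ K), ψ ⟨x, hx⟩ = φ ⟨g * x * g⁻¹, hKH x hx⟩)
    (xK xH : G) (hxK : xK ∈ stabPair K ψ) (hxH : xH ∈ stabPair H φ)
    -- the monocentre condition
    (hmc₁ : g * xK * g⁻¹ ∈ stabPair H φ)
    (hmc₂ : ∃ (w : G) (hw : w ∈ H), φ ⟨w, hw⟩ = 1 ∧ g * xK * g⁻¹ = xH * w)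
    -- the two composite `k[G]`-module homomorphisms, given on generators
    (T₁ T₂ : (MonoidAlgebra k G ⧸ monomialRel k K ψ) →ₗ[MonoidAlgebra k G]
      (MonoidAlgebra k G ⧸ monomialRel k H φ))
    (hT₁ : ∀ g' : G, T₁ (Submodule.Quotient.mk (MonoidAlgebra.of k G g')) =
      Submodule.Quotient.mk (MonoidAlgebra.of k G (g' * (g * xK)⁻¹)))
    (hT₂ : ∀ g' : G, T₂ (Submodule.Quotient.mk (MonoidAlgebra.of k G g')) =
      Submodule.Quotient.mk (MonoidAlgebra.of k G (g' * (xH * g)⁻¹))) :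
    T₁ = T₂ := by
  obtain ⟨w, hw, hφw, hgw⟩ := hmc₂
  exact monocentre_composites_eq_general K H ψ φ g xK xH (mem_normalizer_ker_of_mem_stabPair hxH)
    (mem_map_subtype_ker_iff.mpr (by simpa only [hgw, inv_mul_cancel_left] using ⟨hw, hφw⟩))
    T₁ T₂ hT₁ hT₂
end

section
/- Let k be an algebraically closed field of characteristic zero, R a k-algebra, and E₁ and E₂ simple left R-modules that are finite-dimensional as k-vector spaces. If for every φ ∈ R the trace of the k-linear endomorphism x ↦ φ·x of E₁ equals the trace of the k-linear endomorphism x ↦ φ·x of E₂, then E₁ and E₂ are isomorphic as R-modules. -/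
/-!
Suppose the two simple modules were not isomorphic. By Schur's lemma there are no nonzero maps
between them in either direction, so the projection of `E₁ × E₂` onto `E₁` commutes with every
`R`-endomorphism. Since `E₁ × E₂` is semisimple, the Jacobson density theorem yields `r ∈ R` that
acts on a finite spanning set, hence everywhere, as this projection. Its traces on `E₁` and `E₂` are
`dim E₁` and `0`, which differ in `k` unless the characteristic divides `dim E₁`.
-/

section Density

variable {R M N : Type*} [Ring R] [AddCommGroup M] [Module R M] [AddCommGroup N] [Module R N]

theorem exists_smul_eq_of_mem_center_end [IsSemisimpleModule R M] {z : Module.End R M}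
    (hz : z ∈ Subring.center (Module.End R M)) (s : Finset M) :
    ∃ r : R, ∀ m ∈ s, r • m = z m := by
  let zEnd : Module.End (Module.End R M) M :=
    { toFun := z
      map_add' := z.map_add
      map_smul' := fun g m ↦ (LinearMap.congr_fun (Subring.mem_center_iff.mp hz g) m).symm }
  obtain ⟨r, hr⟩ := jacobson_density zEnd s
  exact ⟨r, fun m hm ↦ (hr m hm).symm⟩

theorem isSemisimpleModule_prod [IsSemisimpleModule R M] [IsSemisimpleModule R N] :
    IsSemisimpleModule R (M × N) := by
  have hsup := IsSemisimpleModule.sup (.range (LinearMap.inl R M N)) (.range (LinearMap.inr R M N))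
  rw [LinearMap.sup_range_inl_inr] at hsup
  exact .congr Submodule.topEquiv.symm

theorem inl_comp_fst_mem_center_end [Subsingleton (M →ₗ[R] N)] [Subsingleton (N →ₗ[R] M)] :
    LinearMap.inl R M N ∘ₗ LinearMap.fst R M N ∈ Subring.center (Module.End R (M × N)) := by
  refine Subring.mem_center_iff.mpr fun g ↦ LinearMap.ext fun ⟨x, y⟩ ↦ ?_
  have fst_inr : (g (0, y)).1 = 0 := LinearMap.congr_fun
    (Subsingleton.elim (LinearMap.fst R M N ∘ₗ g ∘ₗ LinearMap.inr R M N) 0) y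
  have snd_inl : (g (x, 0)).2 = 0 := LinearMap.congr_fun
    (Subsingleton.elim (LinearMap.snd R M N ∘ₗ g ∘ₗ LinearMap.inl R M N) 0) x
  have g_eq_add : g (x, y) = g (x, 0) + g (0, y) := by
    rw [← map_add, Prod.mk_add_mk, add_zero, zero_add]
  change g (x, 0) = ((g (x, y)).1, 0)
  ext
  · rw [g_eq_add, Prod.fst_add, fst_inr, add_zero]
  · exact snd_inl

theorem exists_smul_eq_self_and_smul_eq_zero [IsSemisimpleModule R M] [IsSemisimpleModule R N]
    [Subsingleton (M →ₗ[R] N)] [Subsingleton (N →ₗ[R] M)] (s : Finset M) (t : Finset N) :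
    ∃ r : R, (∀ x ∈ s, r • x = x) ∧ ∀ y ∈ t, r • y = 0 := by
  classical
  have : IsSemisimpleModule R (M × N) := isSemisimpleModule_prod
  obtain ⟨r, hr⟩ := exists_smul_eq_of_mem_center_end
    (inl_comp_fst_mem_center_end (R := R) (M := M) (N := N)) (insert 0 s ×ˢ insert 0 t)
  refine ⟨r, fun x hx ↦ congrArg Prod.fst (hr (x, 0) ?_),
    fun y hy ↦ congrArg Prod.snd (hr (0, y) ?_)⟩
  · simp [hx]
  · simp [hy]

theorem exists_toLinearMap_eq_id_and_eq_zero (k : Type*) [Semiring k]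
    [Module k M] [SMulCommClass R k M] [Module.Finite k M]
    [Module k N] [SMulCommClass R k N] [Module.Finite k N]
    [IsSemisimpleModule R M] [IsSemisimpleModule R N]
    [Subsingleton (M →ₗ[R] N)] [Subsingleton (N →ₗ[R] M)] :
    ∃ r : R, DistribSMul.toLinearMap k M r = LinearMap.id ∧
      DistribSMul.toLinearMap k N r = 0 := by
  obtain ⟨s, span_s⟩ := Module.Finite.fg_top (R := k) (M := M)
  obtain ⟨t, span_t⟩ := Module.Finite.fg_top (R := k) (M := N)
  obtain ⟨r, r_on_s, r_on_t⟩ := exists_smul_eq_self_and_smul_eq_zero (R := R) s t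
  exact ⟨r, LinearMap.ext_on span_s r_on_s, LinearMap.ext_on span_t r_on_t⟩

end Density

theorem subsingleton_linearMap_of_isEmpty_linearEquiv {R M N : Type*} [Ring R]
    [AddCommGroup M] [Module R M] [AddCommGroup N] [Module R N]
    [IsSimpleModule R M] [IsSimpleModule R N] (h : IsEmpty (M ≃ₗ[R] N)) :
    Subsingleton (M →ₗ[R] N) :=
  subsingleton_of_forall_eq 0 fun f ↦
    f.bijective_or_eq_zero.resolve_left fun hf ↦ h.false (.ofBijective f hf)

theorem simple_modules_iso_of_trace_eq_general
    {k : Type*} [Field k] {R : Type*} [Ring R]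
    {E₁ : Type*} [AddCommGroup E₁] [Module R E₁] [Module k E₁] [SMulCommClass R k E₁]
    {E₂ : Type*} [AddCommGroup E₂] [Module R E₂] [Module k E₂] [SMulCommClass R k E₂]
    [IsSimpleModule R E₁] [IsSimpleModule R E₂]
    [FiniteDimensional k E₁] [FiniteDimensional k E₂]
    (finrank_ne_zero : (Module.finrank k E₁ : k) ≠ 0)
    (htr : ∀ φ : R,
      LinearMap.trace k E₁ (DistribSMul.toLinearMap k E₁ φ) =
        LinearMap.trace k E₂ (DistribSMul.toLinearMap k E₂ φ)) :
    Nonempty (E₁ ≃ₗ[R] E₂) := by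
  by_contra not_iso
  rw [not_nonempty_iff] at not_iso
  have : Subsingleton (E₁ →ₗ[R] E₂) := subsingleton_linearMap_of_isEmpty_linearEquiv not_iso
  have : Subsingleton (E₂ →ₗ[R] E₁) :=
    subsingleton_linearMap_of_isEmpty_linearEquiv ⟨fun e ↦ not_iso.false e.symm⟩
  obtain ⟨r, r_on_E₁, r_on_E₂⟩ :=
    exists_toLinearMap_eq_id_and_eq_zero (R := R) (M := E₁) (N := E₂) k
  refine finrank_ne_zero ?_
  simpa only [r_on_E₁, r_on_E₂, LinearMap.trace_id, map_zero] using htr r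

/-- Let `k` be an algebraically closed field of characteristic zero, `R` a `k`-algebra and
`E₁`, `E₂` simple left `R`-modules which are finite-dimensional over `k`.  If for every
`φ ∈ R` the traces of `x ↦ φ • x` on `E₁` and on `E₂` agree, then `E₁ ≅ E₂` as
`R`-modules. -/
theorem simple_modules_iso_of_trace_eq
    {k : Type*} [Field k] [IsAlgClosed k] [CharZero k]
    {R : Type*} [Ring R] [Algebra k R]
    {E₁ : Type*} [AddCommGroup E₁] [Module R E₁] [Module k E₁]
    [IsScalarTower k R E₁] [SMulCommClass R k E₁]
    {E₂ : Type*} [AddCommGroup E₂] [Module R E₂] [Module k E₂]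
    [IsScalarTower k R E₂] [SMulCommClass R k E₂]
    [IsSimpleModule R E₁] [IsSimpleModule R E₂]
    [FiniteDimensional k E₁] [FiniteDimensional k E₂]
    (htr : ∀ φ : R,
      LinearMap.trace k E₁ (DistribMulAction.toLinearMap k E₁ φ) =
        LinearMap.trace k E₂ (DistribMulAction.toLinearMap k E₂ φ)) :
    Nonempty (E₁ ≃ₗ[R] E₂) :=
  have : Nontrivial E₁ := IsSimpleModule.nontrivial R E₁
  simple_modules_iso_of_trace_eq_general (Nat.cast_ne_zero.mpr Module.finrank_pos.ne') htr
end
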